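/- For every n ≥ 1 there exist constants C₁ > 0, C₂ > 0 and ε₀ > 0 (depending only on n) such that: for every ε with 0 < ε ≤ ε₀ and every Hermitian positive-definite n×n complex matrix P with det P = 1 and ‖P − I‖ ≤ ε, there exist invertible n×n complex matrices V_o, W_o, V_e, W_e, each of determinant 1 and each satisfying ‖· − I‖ ≤ C₁·ε^{1/2}, such that ‖ (V_o W_o V_o⁻¹ W_o⁻¹)·(V_e W_e V_e⁻¹ W_e⁻¹) − P ‖ ≤ C₂·ε^{3/2}. -/

import Mathlib

open scoped ComplexOrder

/-- The operator norm (ℓ² → ℓ²) of a square complex matrix. -/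
noncomputable def opNorm {n : ℕ} (M : Matrix (Fin n) (Fin n) ℂ) : ℝ :=
  ‖Matrix.toEuclideanCLM (𝕜 := ℂ) M‖

/-
Near the identity, a matrix `P` of determinant one is `exp L` with `L` of trace zero and
`‖L‖ = O(ε)`. Every trace-zero `L` is a sum `⁅X₁, Y₁⁆ + ⁅X₂, Y₂⁆` of two Lie brackets of trace-zero
matrices, with `X₁`, `X₂` fixed and `Y₁`, `Y₂` linear in `L`: the diagonal can be corrected by an
eigenvector of `ad` of the all-ones matrix, and a zero-diagonal matrix is in the range of `ad` of a
diagonal matrix with distinct entries. Scaling makes all four factors `O(√ε)`. Their exponentials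
have determinant one, and group commutators of exponentials agree with `1` plus the Lie bracket up
to third order, so the error is `O(√ε ^ 3)`.
-/

section BanachAlgebra

open NormedSpace Filter Topology

theorem norm_lie_le_two_mul {𝔸 : Type*} [NonUnitalNormedRing 𝔸] (x y : 𝔸) :
    ‖⁅x, y⁆‖ ≤ 2 * (‖x‖ * ‖y‖) := by
  rw [Ring.lie_def]
  linarith [norm_sub_le (x * y) (y * x), norm_mul_le x y, norm_mul_le y x]

theorem norm_mul_sub_one_le {𝔸 : Type*} [NormedRing 𝔸] (x y : 𝔸) :
    ‖x * y - 1‖ ≤ ‖x - 1‖ * ‖y - 1‖ + ‖x - 1‖ + ‖y - 1‖ := by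
  have h : x * y - 1 = (x - 1) * (y - 1) + (x - 1) + (y - 1) := by noncomm_ring
  rw [h]
  exact norm_add₃_le.trans (by gcongr; exact norm_mul_le _ _)

variable {𝔸 : Type*} [NormedRing 𝔸] [NormedAlgebra ℚ 𝔸] [CompleteSpace 𝔸] {x y : 𝔸} {r : ℝ}

theorem norm_exp_sub_one_sub_self_le_exp_norm (x : 𝔸) :
    ‖exp x - 1 - x‖ ≤ Real.exp ‖x‖ - 1 - ‖x‖ := by
  have hx : HasSum (fun n ↦ ((n + 2).factorial⁻¹ : ℚ) • x ^ (n + 2)) (exp x - 1 - x) := by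
    simpa [Finset.sum_range_succ, sub_sub] using
      (hasSum_nat_add_iff' 2).2 (exp_series_hasSum_exp' (𝕂 := ℚ) x)
  have hr : HasSum (fun n ↦ ((n + 2).factorial⁻¹ : ℝ) • ‖x‖ ^ (n + 2))
      (Real.exp ‖x‖ - 1 - ‖x‖) := by
    simpa [Finset.sum_range_succ, sub_sub, Real.exp_eq_exp_ℝ] using
      (hasSum_nat_add_iff' 2).2 (exp_series_hasSum_exp' (𝕂 := ℝ) ‖x‖)
  refine hx.norm_le_of_bounded hr fun n ↦ ?_
  rw [norm_smul, smul_eq_mul]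
  gcongr
  · exact (Rat.norm_cast_real _).symm.trans_le (by simp)
  · exact norm_pow_le' x (by positivity)

theorem norm_exp_sub_one_sub_self_le (hx : ‖x‖ ≤ 1) : ‖exp x - 1 - x‖ ≤ ‖x‖ ^ 2 := by
  have h := Real.norm_exp_sub_one_sub_id_le (x := ‖x‖) (by simpa using hx)
  rw [norm_norm] at h
  exact (norm_exp_sub_one_sub_self_le_exp_norm x).trans ((le_abs_self _).trans h)

theorem norm_exp_sub_one_le (hx : ‖x‖ ≤ 1) : ‖exp x - 1‖ ≤ 2 * ‖x‖ := by
  have h := norm_add_le (exp x - 1 - x) x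
  rw [sub_add_cancel] at h
  nlinarith [norm_exp_sub_one_sub_self_le hx, norm_nonneg x]

theorem norm_le_two_mul_norm_exp_sub_one (hx : ‖x‖ ≤ 1 / 2) : ‖x‖ ≤ 2 * ‖exp x - 1‖ := by
  have h := norm_sub_le (exp x - 1) (exp x - 1 - x)
  rw [sub_sub_cancel] at h
  nlinarith [norm_exp_sub_one_sub_self_le (hx.trans (by norm_num)), norm_nonneg x]

theorem eq_zero_of_exp_eq_one (hx : ‖x‖ ≤ 1 / 2) (h : exp x = 1) : x = 0 := by
  simpa [h] using norm_le_two_mul_norm_exp_sub_one hx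

theorem map_exp_nhds_zero : map exp (𝓝 (0 : 𝔸)) = 𝓝 1 := by
  have h : HasStrictFDerivAt exp ((ContinuousLinearEquiv.refl ℚ 𝔸 : 𝔸 ≃L[ℚ] 𝔸) : 𝔸 →L[ℚ] 𝔸) 0 :=
    hasStrictFDerivAt_exp_zero_of_radius_pos (expSeries_radius_pos ℚ 𝔸)
  simpa using h.map_nhds_eq_of_equiv

/-- The group commutator of `exp x` and `exp y`. The inverses are written `exp (-x)` and
`exp (-y)`, which makes sense in any Banach algebra without passing to units. -/
noncomputable def expCommutator (x y : 𝔸) : 𝔸 :=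
  exp x * exp y * exp (-x) * exp (-y)

theorem exp_mul_exp_neg (x : 𝔸) : exp x * exp (-x) = 1 := by
  rw [← exp_add_of_commute (Commute.neg_right_iff.2 (Commute.refl x)), add_neg_cancel, exp_zero]

theorem expCommutator_sub_one (x y : 𝔸) :
    expCommutator x y - 1 = ⁅exp x - 1, exp y - 1⁆ * (exp (-x) * exp (-y)) := by
  have h : exp y * exp x * (exp (-x) * exp (-y)) = 1 := by
    rw [mul_assoc, ← mul_assoc (exp x), exp_mul_exp_neg, one_mul, exp_mul_exp_neg]
  have hlie : ⁅exp x - 1, exp y - 1⁆ = exp x * exp y - exp y * exp x := by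
    rw [Ring.lie_def]; noncomm_ring
  rw [hlie, sub_mul, h, expCommutator, mul_assoc (exp x * exp y)]

theorem norm_lie_exp_sub_one_sub_lie_le (hx : ‖x‖ ≤ r) (hy : ‖y‖ ≤ r) (hr : r ≤ 1) :
    ‖⁅exp x - 1, exp y - 1⁆ - ⁅x, y⁆‖ ≤ 6 * r ^ 3 := by
  have hr₀ : 0 ≤ r := (norm_nonneg x).trans hx
  have h : ⁅exp x - 1, exp y - 1⁆ - ⁅x, y⁆ = ⁅exp x - 1 - x, exp y - 1⁆ + ⁅x, exp y - 1 - y⁆ := by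
    simp only [Ring.lie_def]; noncomm_ring
  have h₁ : ‖⁅exp x - 1 - x, exp y - 1⁆‖ ≤ 2 * (r ^ 2 * (2 * r)) := by
    refine (norm_lie_le_two_mul _ _).trans ?_
    gcongr
    · exact (norm_exp_sub_one_sub_self_le (hx.trans hr)).trans (by gcongr)
    · exact (norm_exp_sub_one_le (hy.trans hr)).trans (by gcongr)
  have h₂ : ‖⁅x, exp y - 1 - y⁆‖ ≤ 2 * (r * r ^ 2) := by
    refine (norm_lie_le_two_mul _ _).trans ?_
    gcongr
    exact (norm_exp_sub_one_sub_self_le (hy.trans hr)).trans (by gcongr)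
  rw [h]
  linarith [norm_add_le ⁅exp x - 1 - x, exp y - 1⁆ ⁅x, exp y - 1 - y⁆]

theorem norm_exp_mul_exp_sub_one_le (hx : ‖x‖ ≤ r) (hy : ‖y‖ ≤ r) (hr : r ≤ 1) :
    ‖exp x * exp y - 1‖ ≤ 8 * r := by
  have hr₀ : 0 ≤ r := (norm_nonneg x).trans hx
  have hx' := norm_exp_sub_one_le (hx.trans hr)
  have hy' := norm_exp_sub_one_le (hy.trans hr)
  calc ‖exp x * exp y - 1‖
      ≤ ‖exp x - 1‖ * ‖exp y - 1‖ + ‖exp x - 1‖ + ‖exp y - 1‖ := norm_mul_sub_one_le _ _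
    _ ≤ (2 * r) * (2 * r) + 2 * r + 2 * r := by gcongr <;> linarith
    _ ≤ 8 * r := by nlinarith

theorem norm_expCommutator_sub_one_sub_lie_le (hx : ‖x‖ ≤ r) (hy : ‖y‖ ≤ r) (hr : r ≤ 1) :
    ‖expCommutator x y - 1 - ⁅x, y⁆‖ ≤ 70 * r ^ 3 := by
  have hr₀ : 0 ≤ r := (norm_nonneg x).trans hx
  set c := ⁅exp x - 1, exp y - 1⁆
  set u := exp (-x) * exp (-y)
  have h : expCommutator x y - 1 - ⁅x, y⁆ = c * (u - 1) + (c - ⁅x, y⁆) := by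
    rw [expCommutator_sub_one, mul_sub_one, sub_add_sub_cancel]
  have hc : ‖c‖ ≤ 2 * (2 * r * (2 * r)) := by
    refine (norm_lie_le_two_mul _ _).trans ?_
    gcongr
    · exact (norm_exp_sub_one_le (hx.trans hr)).trans (by gcongr)
    · exact (norm_exp_sub_one_le (hy.trans hr)).trans (by gcongr)
  have hu : ‖u - 1‖ ≤ 8 * r :=
    norm_exp_mul_exp_sub_one_le ((norm_neg x).trans_le hx) ((norm_neg y).trans_le hy) hr
  calc ‖expCommutator x y - 1 - ⁅x, y⁆‖
      ≤ ‖c‖ * ‖u - 1‖ + ‖c - ⁅x, y⁆‖ := by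
        rw [h]; exact (norm_add_le _ _).trans (by gcongr; exact norm_mul_le _ _)
    _ ≤ 2 * (2 * r * (2 * r)) * (8 * r) + 6 * r ^ 3 := by
        gcongr; exact norm_lie_exp_sub_one_sub_lie_le hx hy hr
    _ = 70 * r ^ 3 := by ring

theorem norm_expCommutator_sub_one_le (hx : ‖x‖ ≤ r) (hy : ‖y‖ ≤ r) (hr : r ≤ 1) :
    ‖expCommutator x y - 1‖ ≤ 72 * r ^ 2 := by
  have hr₀ : 0 ≤ r := (norm_nonneg x).trans hx
  have h₁ : ‖⁅x, y⁆‖ ≤ 2 * (r * r) := (norm_lie_le_two_mul _ _).trans (by gcongr)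
  have h₂ := norm_expCommutator_sub_one_sub_lie_le hx hy hr
  have h₃ := norm_add_le (expCommutator x y - 1 - ⁅x, y⁆) ⁅x, y⁆
  rw [sub_add_cancel] at h₃
  nlinarith [pow_le_pow_of_le_one hr₀ hr (show 2 ≤ 3 by norm_num)]

theorem norm_expCommutator_mul_expCommutator_sub_exp_le {x₁ y₁ x₂ y₂ : 𝔸}
    (hx₁ : ‖x₁‖ ≤ r) (hy₁ : ‖y₁‖ ≤ r) (hx₂ : ‖x₂‖ ≤ r) (hy₂ : ‖y₂‖ ≤ r) (hr : r ≤ 1 / 2) :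
    ‖expCommutator x₁ y₁ * expCommutator x₂ y₂ - exp (⁅x₁, y₁⁆ + ⁅x₂, y₂⁆)‖ ≤ 2740 * r ^ 3 := by
  have hr₀ : 0 ≤ r := (norm_nonneg x₁).trans hx₁
  have hr₁ : r ≤ 1 := hr.trans (by norm_num)
  set c₁ := expCommutator x₁ y₁
  set c₂ := expCommutator x₂ y₂
  set l := ⁅x₁, y₁⁆ + ⁅x₂, y₂⁆
  have hl : ‖l‖ ≤ 4 * r ^ 2 := by
    refine (norm_add_le_of_le (norm_lie_le_two_mul _ _) (norm_lie_le_two_mul _ _)).trans ?_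
    calc 2 * (‖x₁‖ * ‖y₁‖) + 2 * (‖x₂‖ * ‖y₂‖) ≤ 2 * (r * r) + 2 * (r * r) := by gcongr
      _ = 4 * r ^ 2 := by ring
  have hexp : ‖exp l - 1 - l‖ ≤ (4 * r ^ 2) ^ 2 :=
    (norm_exp_sub_one_sub_self_le (hl.trans (by nlinarith))).trans (by gcongr)
  have hc : ‖(c₁ - 1) * (c₂ - 1)‖ ≤ 72 * r ^ 2 * (72 * r ^ 2) :=
    norm_mul_le_of_le (norm_expCommutator_sub_one_le hx₁ hy₁ hr₁)
      (norm_expCommutator_sub_one_le hx₂ hy₂ hr₁)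
  have h₁ : ‖c₁ - 1 - ⁅x₁, y₁⁆‖ ≤ 70 * r ^ 3 := norm_expCommutator_sub_one_sub_lie_le hx₁ hy₁ hr₁
  have h₂ : ‖c₂ - 1 - ⁅x₂, y₂⁆‖ ≤ 70 * r ^ 3 := norm_expCommutator_sub_one_sub_lie_le hx₂ hy₂ hr₁
  have h : c₁ * c₂ - exp l = (c₁ - 1) * (c₂ - 1) + (c₁ - 1 - ⁅x₁, y₁⁆) + (c₂ - 1 - ⁅x₂, y₂⁆)
      - (exp l - 1 - l) := by
    simp only [l]; noncomm_ring
  calc ‖c₁ * c₂ - exp l‖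
      ≤ 72 * r ^ 2 * (72 * r ^ 2) + 70 * r ^ 3 + 70 * r ^ 3 + (4 * r ^ 2) ^ 2 := by
        rw [h]
        exact norm_sub_le_of_le (norm_add_le_of_le (norm_add_le_of_le hc h₁) h₂) hexp
    _ = 140 * r ^ 3 + 5200 * r * r ^ 3 := by ring
    _ ≤ 140 * r ^ 3 + 5200 * (1 / 2) * r ^ 3 := by gcongr
    _ = 2740 * r ^ 3 := by ring

end BanachAlgebra

section TraceZero

open Matrix

variable {n K : Type*} [Field K]

/-- The inverse of `ad (diagonal d)`, for injective `d`, on the matrices with zero diagonal.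
Diagonal entries are sent to `0` because `x / 0 = 0`. -/
def adDiagonalInv (d : n → K) : Matrix n n K →ₗ[K] Matrix n n K where
  toFun A := of fun i j ↦ A i j / (d i - d j)
  map_add' A B := by ext; simp [add_div]
  map_smul' c A := by ext; simp [mul_div_assoc]

theorem adDiagonalInv_apply (d : n → K) (A : Matrix n n K) (i j : n) :
    adDiagonalInv d A i j = A i j / (d i - d j) := rfl

/-- The projection of square matrices that replaces every row by the diagonal. It is used instead
of the diagonal part because, on trace-zero matrices, the result is an eigenvector of the adjoint
action of the all-ones matrix. -/
def replicateDiag : Matrix n n K →ₗ[K] Matrix n n K where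
  toFun A := replicateRow n A.diag
  map_add' _ _ := rfl
  map_smul' _ _ := rfl

theorem replicateDiag_apply (A : Matrix n n K) (i j : n) : replicateDiag A i j = A j j := rfl

theorem diag_sub_replicateDiag (A : Matrix n n K) : (A - replicateDiag A).diag = 0 :=
  funext fun i ↦ sub_self (A i i)

variable [Fintype n]

theorem trace_adDiagonalInv (d : n → K) (A : Matrix n n K) : (adDiagonalInv d A).trace = 0 := by
  simp [trace, adDiagonalInv_apply]

theorem trace_replicateDiag (A : Matrix n n K) : (replicateDiag A).trace = A.trace := rfl

variable (n K) in
theorem exists_injective_sum_eq_zero [CharZero K] : ∃ d : n → K, d.Injective ∧ ∑ i, d i = 0 := by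
  classical
  have hinj : Function.Injective fun i : n ↦ ((Fintype.equivFin n i : ℕ) : K) :=
    Nat.cast_injective.comp (Fin.val_injective.comp (Fintype.equivFin n).injective)
  exact ⟨Fintype.balance _, fun i j h ↦ hinj (sub_left_injective h), Fintype.sum_balance _⟩

theorem lie_diagonal_adDiagonalInv [DecidableEq n] {d : n → K} (hd : d.Injective)
    {A : Matrix n n K} (hA : A.diag = 0) : ⁅diagonal d, adDiagonalInv d A⁆ = A := by
  ext i j
  rw [Ring.lie_def, Matrix.sub_apply, diagonal_mul, mul_diagonal, adDiagonalInv_apply]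
  obtain rfl | hij := eq_or_ne i j
  · simpa [mul_comm] using (congrFun hA i).symm
  · have : d i - d j ≠ 0 := sub_ne_zero.2 (hd.ne hij)
    field_simp

theorem lie_replicateRow_one_sub_one_replicateDiag [DecidableEq n] [CharZero K]
    {A : Matrix n n K} (hA : A.trace = 0) :
    ⁅(replicateRow n 1 - 1 : Matrix n n K), (Fintype.card n : K)⁻¹ • replicateDiag A⁆ =
      replicateDiag A := by
  ext i j
  have : Nonempty n := ⟨i⟩
  have hA' : ∑ k, A k k = 0 := hA
  simp [Ring.lie_def, sub_mul, mul_sub, mul_apply, replicateDiag_apply, hA']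

variable (n K) in
theorem exists_linearMap_lie_add_lie_eq [CharZero K] :
    ∃ (X₁ X₂ : Matrix n n K) (S T : Matrix n n K →ₗ[K] Matrix n n K),
      X₁.trace = 0 ∧ X₂.trace = 0 ∧ ∀ A, A.trace = 0 →
        (S A).trace = 0 ∧ (T A).trace = 0 ∧ ⁅X₁, S A⁆ + ⁅X₂, T A⁆ = A := by
  classical
  obtain ⟨d, hd, hd₀⟩ := exists_injective_sum_eq_zero n K
  refine ⟨diagonal d, replicateRow n 1 - 1, adDiagonalInv d ∘ₗ (LinearMap.id - replicateDiag),
    (Fintype.card n : K)⁻¹ • replicateDiag, by simpa using hd₀, by simp [trace],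
    fun A hA ↦ ⟨trace_adDiagonalInv _ _, by simp [trace_replicateDiag, hA], ?_⟩⟩
  have hoff := lie_diagonal_adDiagonalInv hd (diag_sub_replicateDiag A)
  have hdiag := lie_replicateRow_one_sub_one_replicateDiag hA
  simp only [LinearMap.comp_apply, LinearMap.sub_apply, LinearMap.id_apply, LinearMap.smul_apply,
    hoff, hdiag, sub_add_cancel]

end TraceZero

section L2OpNorm

open Matrix NormedSpace Filter Topology
open scoped Matrix.Norms.L2Operator

variable {n 𝕜 : Type*} [Fintype n] [DecidableEq n] [RCLike 𝕜]

noncomputable local instance : NormedAlgebra ℚ (Matrix n n 𝕜) := .restrictScalars ℚ 𝕜 _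

theorem differentiable_det : Differentiable 𝕜 (det : Matrix n n 𝕜 → 𝕜) := by
  have (i j : n) : Differentiable 𝕜 fun A : Matrix n n 𝕜 ↦ A i j :=
    (entryLinearMap 𝕜 𝕜 i j).toContinuousLinearMap.differentiable
  simp only [funext det_apply]
  fun_prop

theorem hasDerivAt_det_one_add_smul (A : Matrix n n 𝕜) :
    HasDerivAt (fun t : 𝕜 ↦ det (1 + t • A)) A.trace 0 := by
  let p : Polynomial 𝕜 := det (1 + (Polynomial.X : Polynomial 𝕜) • A.map Polynomial.C)
  have hp (t : 𝕜) : p.eval t = det (1 + t • A) := by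
    simp [p, eval_det, ← smul_eq_mul_diagonal]
  simpa only [← hp, p, derivative_det_one_add_X_smul] using p.hasDerivAt 0

theorem fderiv_det_one (A : Matrix n n 𝕜) : fderiv 𝕜 det 1 A = A.trace := by
  have hdet : HasFDerivAt (det : Matrix n n 𝕜 → 𝕜) (fderiv 𝕜 det 1) (1 + (0 : 𝕜) • A) := by
    simpa using (differentiable_det 1).hasFDerivAt
  have hline : HasDerivAt (fun t : 𝕜 ↦ 1 + t • A) A 0 := by
    simpa using ((hasDerivAt_id (0 : 𝕜)).smul_const A).const_add 1
  exact (hdet.comp_hasDerivAt 0 hline).unique (hasDerivAt_det_one_add_smul A)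

theorem hasDerivAt_det_exp_smul_zero (A : Matrix n n 𝕜) :
    HasDerivAt (fun t : 𝕜 ↦ det (exp (t • A))) A.trace 0 := by
  have hdet : HasFDerivAt (det : Matrix n n 𝕜 → 𝕜) (fderiv 𝕜 det 1) (exp ((0 : 𝕜) • A)) := by
    simpa using (differentiable_det 1).hasFDerivAt
  have hexp : HasDerivAt (fun t : 𝕜 ↦ exp (t • A)) A 0 := by
    simpa using hasDerivAt_exp_smul_const A (0 : 𝕜)
  exact fderiv_det_one A ▸ hdet.comp_hasDerivAt 0 hexp

theorem hasDerivAt_det_exp_smul (A : Matrix n n 𝕜) (t : 𝕜) :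
    HasDerivAt (fun t : 𝕜 ↦ det (exp (t • A))) (A.trace * det (exp (t • A))) t := by
  have hmul (s : 𝕜) : det (exp (s • A)) = det (exp ((s - t) • A)) * det (exp (t • A)) := by
    rw [← det_mul, ← NormedSpace.exp_add_of_commute (((Commute.refl A).smul_left _).smul_right _),
      ← add_smul, sub_add_cancel]
  have h : HasDerivAt (fun s : 𝕜 ↦ det (exp ((s - t) • A))) A.trace t :=
    HasDerivAt.comp_sub_const t t (by simpa using hasDerivAt_det_exp_smul_zero A)
  simpa only [← hmul] using h.mul_const (det (exp (t • A)))

theorem det_exp (A : Matrix n n 𝕜) : det (exp A) = exp A.trace := by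
  let f : 𝕜 → 𝕜 := fun t ↦ det (exp (t • A)) * exp (t • -A.trace)
  have hf (t : 𝕜) : HasDerivAt f 0 t := by
    refine ((hasDerivAt_det_exp_smul A t).mul
      (hasDerivAt_exp_smul_const (-A.trace) t)).congr_deriv ?_
    ring
  have h : f 1 = f 0 :=
    is_const_of_deriv_eq_zero (fun t ↦ (hf t).differentiableAt) (fun t ↦ (hf t).deriv) 1 0
  have h' : det (exp A) * exp (-A.trace) = 1 := by simpa [f] using h
  rw [NormedSpace.exp_neg] at h'
  exact eq_of_mul_inv_eq_one h'

theorem det_exp_eq_one {A : Matrix n n 𝕜} (hA : A.trace = 0) : det (exp A) = 1 := by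
  rw [det_exp, hA, exp_zero]

variable (n 𝕜) in
theorem eventually_exists_trace_eq_zero_exp_eq :
    ∀ᶠ P in 𝓝 (1 : Matrix n n 𝕜), P.det = 1 →
      ∃ L : Matrix n n 𝕜, L.trace = 0 ∧ ‖L‖ ≤ 2 * ‖P - 1‖ ∧ exp L = P := by
  rw [← map_exp_nhds_zero, eventually_map]
  have htrace : ∀ᶠ L : Matrix n n 𝕜 in 𝓝 0, ‖L.trace‖ < 1 / 2 :=
    (continuous_id.matrix_trace.norm.tendsto' 0 0 (by simp)).eventually_lt_const (by norm_num)
  have hnorm : ∀ᶠ L : Matrix n n 𝕜 in 𝓝 0, ‖L‖ < 1 / 2 :=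
    tendsto_norm_zero.eventually_lt_const (by norm_num)
  filter_upwards [htrace, hnorm] with L hL_trace hL hdet
  exact ⟨L, eq_zero_of_exp_eq_one hL_trace.le (det_exp L ▸ hdet),
    norm_le_two_mul_norm_exp_sub_one hL.le, rfl⟩

variable (n 𝕜) in
theorem exists_forall_lie_add_lie_eq_norm_le :
    ∃ K > (0 : ℝ), ∀ A : Matrix n n 𝕜, A.trace = 0 → ∀ r : ℝ, 0 < r → ‖A‖ ≤ r ^ 2 →
      ∃ X₁ Y₁ X₂ Y₂ : Matrix n n 𝕜,
        (X₁.trace = 0 ∧ Y₁.trace = 0 ∧ X₂.trace = 0 ∧ Y₂.trace = 0) ∧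
        (‖X₁‖ ≤ K * r ∧ ‖Y₁‖ ≤ K * r ∧ ‖X₂‖ ≤ K * r ∧ ‖Y₂‖ ≤ K * r) ∧
        ⁅X₁, Y₁⁆ + ⁅X₂, Y₂⁆ = A := by
  obtain ⟨X₁, X₂, S, T, hX₁, hX₂, h⟩ := exists_linearMap_lie_add_lie_eq n 𝕜
  let S' := S.toContinuousLinearMap
  let T' := T.toContinuousLinearMap
  let K := 1 + ‖X₁‖ + ‖X₂‖ + ‖S'‖ + ‖T'‖
  refine ⟨K, by positivity, fun A hA r hr hAr ↦ ?_⟩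
  obtain ⟨hS, hT, hA'⟩ := h A hA
  have hr' : (r : 𝕜) ≠ 0 := mod_cast hr.ne'
  have hX {X : Matrix n n 𝕜} (hXK : ‖X‖ ≤ K) : ‖(r : 𝕜) • X‖ ≤ K * r := by
    rw [norm_smul, RCLike.norm_of_nonneg hr.le, mul_comm]
    gcongr
  have hY {R : Matrix n n 𝕜 →L[𝕜] Matrix n n 𝕜} (hRK : ‖R‖ ≤ K) :
      ‖(r : 𝕜)⁻¹ • R A‖ ≤ K * r := by
    rw [norm_smul, norm_inv, RCLike.norm_of_nonneg hr.le, inv_mul_le_iff₀ hr]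
    calc ‖R A‖ ≤ K * r ^ 2 := R.le_of_opNorm_le_of_le hRK hAr
      _ = r * (K * r) := by ring
  refine ⟨(r : 𝕜) • X₁, (r : 𝕜)⁻¹ • S A, (r : 𝕜) • X₂, (r : 𝕜)⁻¹ • T A,
    by simp [hX₁, hX₂, hS, hT], ⟨hX ?_, hY (R := S') ?_, hX ?_, hY (R := T') ?_⟩, ?_⟩
  case refine_5 => simpa only [Ring.lie_def, smul_mul_smul_comm, mul_inv_cancel₀ hr',
    inv_mul_cancel₀ hr', one_smul] using hA'
  all_goals linarith [norm_nonneg X₁, norm_nonneg X₂, norm_nonneg S', norm_nonneg T']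

theorem stmt18_general (n 𝕜 : Type*) [Fintype n] [DecidableEq n] [RCLike 𝕜] :
    ∃ C₁ > (0 : ℝ), ∃ C₂ > (0 : ℝ), ∃ ε₀ > (0 : ℝ), ∀ ε : ℝ, 0 < ε → ε ≤ ε₀ →
      ∀ P : Matrix n n 𝕜, P.det = 1 → ‖P - 1‖ ≤ ε →
        ∃ Vo Wo Ve We : Matrix n n 𝕜,
          Vo.det = 1 ∧ Wo.det = 1 ∧ Ve.det = 1 ∧ We.det = 1 ∧
          ‖Vo - 1‖ ≤ C₁ * √ε ∧ ‖Wo - 1‖ ≤ C₁ * √ε ∧ ‖Ve - 1‖ ≤ C₁ * √ε ∧ ‖We - 1‖ ≤ C₁ * √ε ∧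
          ‖(Vo * Wo * Vo⁻¹ * Wo⁻¹) * (Ve * We * Ve⁻¹ * We⁻¹) - P‖ ≤ C₂ * (ε * √ε) := by
  obtain ⟨K, hK, hlie⟩ := exists_forall_lie_add_lie_eq_norm_le n 𝕜
  obtain ⟨δ, hδ, hlog⟩ := Metric.eventually_nhds_iff.1 (eventually_exists_trace_eq_zero_exp_eq n 𝕜)
  refine ⟨4 * K, by positivity, 2740 * (2 * K) ^ 3, by positivity,
    min (δ / 2) ((4 * K)⁻¹ ^ 2), by positivity, fun ε hε hε₀ P hdet hP ↦ ?_⟩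
  obtain ⟨hεδ, hεK⟩ := le_min_iff.1 hε₀
  obtain ⟨L, hL, hLP, rfl⟩ := hlog (dist_eq_norm P 1 ▸ hP.trans_lt (by linarith)) hdet
  have hLε : ‖L‖ ≤ (2 * √ε) ^ 2 := by rw [mul_pow, Real.sq_sqrt hε.le]; linarith
  obtain ⟨X₁, Y₁, X₂, Y₂, ⟨tX₁, tY₁, tX₂, tY₂⟩, ⟨nX₁, nY₁, nX₂, nY₂⟩, rfl⟩ :=
    hlie L hL (2 * √ε) (by positivity) hLε
  have hr : K * (2 * √ε) ≤ 1 / 2 := by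
    calc K * (2 * √ε) ≤ K * (2 * (4 * K)⁻¹) := by
          gcongr; exact (Real.sqrt_le_left (by positivity)).2 hεK
      _ = 1 / 2 := by field_simp; norm_num
  have hexp {X : Matrix n n 𝕜} (hX : ‖X‖ ≤ K * (2 * √ε)) : ‖exp X - 1‖ ≤ 4 * K * √ε :=
    (norm_exp_sub_one_le (by linarith)).trans (by linarith)
  refine ⟨exp X₁, exp Y₁, exp X₂, exp Y₂, det_exp_eq_one tX₁, det_exp_eq_one tY₁,
    det_exp_eq_one tX₂, det_exp_eq_one tY₂, hexp nX₁, hexp nY₁, hexp nX₂, hexp nY₂, ?_⟩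
  have happrox := norm_expCommutator_mul_expCommutator_sub_exp_le nX₁ nY₁ nX₂ nY₂ hr
  simp only [expCommutator, Matrix.exp_neg] at happrox
  calc _ ≤ 2740 * (K * (2 * √ε)) ^ 3 := happrox
    _ = 2740 * (2 * K) ^ 3 * (√ε ^ 2 * √ε) := by ring
    _ = 2740 * (2 * K) ^ 3 * (ε * √ε) := by rw [Real.sq_sqrt hε.le]

end L2OpNorm

/-- Every Hermitian positive-definite matrix `P` with `det P = 1` and `‖P − I‖ ≤ ε`
is, up to error `C₂ ε^{3/2}`, a product of two group commutators of determinant-one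
matrices at distance at most `C₁ ε^{1/2}` from the identity. -/
theorem stmt18 (n : ℕ) (hn : 1 ≤ n) :
    ∃ C₁ > (0 : ℝ), ∃ C₂ > (0 : ℝ), ∃ ε₀ > (0 : ℝ),
      ∀ ε : ℝ, 0 < ε → ε ≤ ε₀ →
      ∀ P : Matrix (Fin n) (Fin n) ℂ, P.PosDef → P.det = 1 →
        opNorm (P - 1) ≤ ε →
        ∃ Vo Wo Ve We : Matrix (Fin n) (Fin n) ℂ,
          Vo.det = 1 ∧ Wo.det = 1 ∧ Ve.det = 1 ∧ We.det = 1 ∧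
          opNorm (Vo - 1) ≤ C₁ * Real.sqrt ε ∧
          opNorm (Wo - 1) ≤ C₁ * Real.sqrt ε ∧
          opNorm (Ve - 1) ≤ C₁ * Real.sqrt ε ∧
          opNorm (We - 1) ≤ C₁ * Real.sqrt ε ∧
          opNorm ((Vo * Wo * Vo⁻¹ * Wo⁻¹) * (Ve * We * Ve⁻¹ * We⁻¹) - P) ≤
            C₂ * (ε * Real.sqrt ε) := by
  obtain ⟨C₁, hC₁, C₂, hC₂, ε₀, hε₀, h⟩ := stmt18_general (Fin n) ℂ
  exact ⟨C₁, hC₁, C₂, hC₂, ε₀, hε₀, fun ε hε hle P _ ↦ h ε hε hle P⟩
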